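/- Let x^n - A be irreducible over F_q with root θ ∈ F_{q^n}, and let ~ be the equivalence relation on {0,1,...,n-1} given by l_1 ~ l_2 iff l_1 ≡ l_2 q^i (mod n) for some i ≥ 0, with equivalence classes M_l for l in a set of representatives S. Let V_l be the F_q-span of {θ^m : m ∈ M_l}. Then F_{q^n} = ⊕_{l ∈ S} V_l, each V_l is invariant under the Frobenius τ(x) = x^q, and an element α = Σ_{l∈S} α_l (α_l ∈ V_l) is normal over F_q if and only if α_l ≠ 0 for all l ∈ S. -/

import Mathlib

open Polynomial Module

namespace MonoidAlgebra

variable {K G : Type*} [Field K] [Fintype K] [CommGroup G]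

/-- Over a field with `q` elements, raising to the power `q ^ m` in the group algebra of an abelian
group only affects the group elements. -/
lemma pow_card_pow_eq_mapDomain (m : ℕ) (f : MonoidAlgebra K G) :
    f ^ Fintype.card K ^ m = mapDomain (fun g : G => g ^ Fintype.card K ^ m) f := by
  have frob : (FiniteField.frobeniusAlgHom K (MonoidAlgebra K G)) ^ m =
      mapDomainAlgHom K K (powMonoidHom (Fintype.card K ^ m)) := by
    ext g : 2
    simp [AlgHom.coe_pow, FiniteField.coe_frobeniusAlgHom, pow_iterate, single_pow]
  have h := congr($frob f)
  rwa [AlgHom.coe_pow, FiniteField.coe_frobeniusAlgHom, pow_iterate] at h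

lemma coeff_pow_card_eq_of_isIdempotentElem [Finite G]
    (hcop : (Nat.card G).Coprime (Fintype.card K)) {f : MonoidAlgebra K G}
    (hf : IsIdempotentElem f) (i : ℕ) (g : G) :
    f.coeff (g ^ Fintype.card K ^ i) = f.coeff g := by
  have hinj : Function.Injective fun g : G => g ^ Fintype.card K ^ i :=
    (powCoprime (hcop.pow_right i)).injective
  have h := pow_card_pow_eq_mapDomain i f
  rw [hf.pow_eq (pow_ne_zero _ Fintype.card_ne_zero)] at h
  conv_lhs => rw [h]
  rw [coeff_mapDomain]
  exact Finsupp.mapDomain_apply hinj _ _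

/-- In the group algebra of a finite abelian group of order prime to the characteristic, every
element has an idempotent multiple which fixes it. -/
lemma exists_isIdempotentElem_mul_eq [Finite G]
    (hcop : (Nat.card G).Coprime (Fintype.card K)) (r : MonoidAlgebra K G) :
    ∃ s, IsIdempotentElem (s * r) ∧ s * r * r = r := by
  set Q := Fintype.card K ^ (Nat.card G).totient with hQ
  have hQ2 : 2 ≤ Q := by
    have : 0 < (Nat.card G).totient := Nat.totient_pos.2 Nat.card_pos
    exact Nat.one_lt_pow this.ne' Fintype.one_lt_card
  have hr : r ^ Q = r := by
    rw [hQ, pow_card_pow_eq_mapDomain]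
    have : (fun g : G => g ^ Fintype.card K ^ (Nat.card G).totient) = id := by
      ext g
      rw [← pow_mod_natCard, Nat.ModEq.pow_totient hcop.symm, pow_mod_natCard, pow_one, id]
    rw [this]
    ext; simp
  obtain ⟨k, hk⟩ := Nat.exists_eq_add_of_le' hQ2
  rw [hk] at hr
  refine ⟨r ^ k, ?_, ?_⟩
  · calc r ^ k * r * (r ^ k * r) = r ^ k * r ^ (k + 2) := by ring
      _ = r ^ k * r := by rw [hr]
  · rw [mul_assoc, ← sq, ← pow_add, hr]

end MonoidAlgebra

section

variable {R M ι : Type*} [Ring R] [AddCommGroup M] [Module R M] [Fintype ι]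

lemma iSupIndep.eq_zero_of_sum_eq_zero {V : ι → Submodule R M} (hV : iSupIndep V) {v : ι → M}
    (hv : ∀ i, v i ∈ V i) (h : ∑ i, v i = 0) (i : ι) : v i = 0 :=
  (iSupIndep_iff_finsetSum_eq_zero_imp_eq_zero V).1 hV Finset.univ v (fun i _ => hv i) h i
    (Finset.mem_univ i)

lemma Submodule.exists_sum_eq_of_iSup_eq_top {V : ι → Submodule R M} (hV : iSup V = ⊤) (x : M) :
    ∃ v : ι → M, (∀ i, v i ∈ V i) ∧ ∑ i, v i = x := by
  classical
  obtain ⟨f, hf⟩ := (Submodule.mem_iSup_iff_exists_dfinsupp' V x).1 (hV ▸ Submodule.mem_top)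
  refine ⟨fun i => f i, fun i => (f i).2, ?_⟩
  rw [← hf, DFinsupp.sum_eq_sum_fintype _ (by simp)]
  rfl

end

section

variable {K G W : Type*} [Field K] [CommGroup G] [Fintype G] [AddCommGroup W] [Module K W]
  (ρ : G →* End K W)

lemma MonoidAlgebra.lift_apply_apply (r : MonoidAlgebra K G) (x : W) :
    MonoidAlgebra.lift K (End K W) G ρ r x = ∑ g, r.coeff g • ρ g x := by
  rw [MonoidAlgebra.lift_apply, Finsupp.sum_fintype _ _ (by simp)]
  simp [LinearMap.sum_apply]

lemma linearIndependent_orbit_iff {x : W} : LinearIndependent K (fun g => ρ g x) ↔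
    ∀ r, MonoidAlgebra.lift K (End K W) G ρ r x = 0 → r = 0 := by
  rw [Fintype.linearIndependent_iff]
  constructor
  · intro h r hr
    rw [MonoidAlgebra.lift_apply_apply] at hr
    ext g
    simpa using h _ hr g
  · intro h c hc g
    have := h (.ofCoeff (Finsupp.equivFunOnFinite.symm c))
      (by rw [MonoidAlgebra.lift_apply_apply]; simpa using hc)
    simpa using congr($(this).coeff g)

lemma lift_mem_of_forall_mem {U : Submodule K W} (hst : ∀ g, ∀ x ∈ U, ρ g x ∈ U)
    (r : MonoidAlgebra K G) {x : W} (hx : x ∈ U) :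
    MonoidAlgebra.lift K (End K W) G ρ r x ∈ U := by
  rw [MonoidAlgebra.lift_apply_apply]
  exact Submodule.sum_mem _ fun g _ => Submodule.smul_mem _ _ (hst g x hx)

variable {ι : Type*} [Fintype ι] {V : ι → Submodule K W}

/-- If a representation has a cyclic vector, the projections of a decomposition into
subrepresentations are given by idempotents of the group algebra. -/
lemma exists_projections (hst : ∀ l g, ∀ x ∈ V l, ρ g x ∈ V l)
    (hind : iSupIndep V) (htop : iSup V = ⊤) (b : Basis G K W) (β : W) (hb : ∀ g, b g = ρ g β) :
    ∃ e : ι → MonoidAlgebra K G, (∀ l, IsIdempotentElem (e l)) ∧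
      ∀ v : ι → W, (∀ l, v l ∈ V l) → ∀ l,
        MonoidAlgebra.lift K (End K W) G ρ (e l) (∑ j, v j) = v l := by
  classical
  set Φ := MonoidAlgebra.lift K (End K W) G ρ with hΦ
  have hli : ∀ r, Φ r β = 0 → r = 0 :=
    (linearIndependent_orbit_iff ρ).1 (by simpa [← funext hb] using b.linearIndependent)
  have hsurj (x : W) : ∃ r, Φ r β = x := by
    refine ⟨.ofCoeff (b.repr x), ?_⟩
    rw [hΦ, MonoidAlgebra.lift_apply_apply]
    simpa [hb] using b.sum_repr x
  have hcomm (r s) (x : W) : Φ r (Φ s x) = Φ s (Φ r x) := by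
    simp only [← Module.End.mul_apply, ← map_mul, mul_comm]
  obtain ⟨β', hβ', hsum⟩ := Submodule.exists_sum_eq_of_iSup_eq_top htop β
  choose e he using fun l => hsurj (β' l)
  have hmem (l : ι) (x : W) : Φ (e l) x ∈ V l := by
    obtain ⟨r, rfl⟩ := hsurj x
    rw [hcomm, he]
    exact lift_mem_of_forall_mem ρ (hst l) _ (hβ' l)
  have hone (x : W) : ∑ l, Φ (e l) x = x := by
    obtain ⟨r, rfl⟩ := hsurj x
    simp_rw [hcomm _ r, he, ← map_sum, hsum]
  have hproj (v : ι → W) (hv : ∀ l, v l ∈ V l) (l : ι) : Φ (e l) (∑ j, v j) = v l := by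
    refine sub_eq_zero.1 (hind.eq_zero_of_sum_eq_zero
      (v := fun l => Φ (e l) (∑ j, v j) - v l) (fun l => sub_mem (hmem l _) (hv l)) ?_ l)
    rw [Finset.sum_sub_distrib, hone, sub_self]
  refine ⟨e, fun l => ?_, hproj⟩
  refine sub_eq_zero.1 (hli _ ?_)
  have := hproj (fun j => if j = l then β' l else 0) (fun j => by
    split_ifs with h
    · exact h ▸ hβ' l
    · exact zero_mem _) l
  simp only [Finset.sum_ite_eq', Finset.mem_univ, if_true] at this
  simp [he, this]

/-- Suppose the regular representation of a finite abelian group `G` over a field with `q` elements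
is decomposed into as many nonzero subrepresentations as there are orbits of `g ↦ g ^ q` on `G`.
Then a vector is cyclic if and only if all its components are nonzero. -/
theorem linearIndependent_orbit_iff_forall_ne_zero [Fintype K]
    (hcop : (Nat.card G).Coprime (Fintype.card K))
    (hst : ∀ l g, ∀ x ∈ V l, ρ g x ∈ V l)
    (hind : iSupIndep V) (htop : iSup V = ⊤) (hne : ∀ l, V l ≠ ⊥)
    (b : Basis G K W) (β : W) (hb : ∀ g, b g = ρ g β)
    (s : ι → G) (hs : ∀ g, ∃ l i, g = s l ^ Fintype.card K ^ i)
    (a : ι → W) (ha : ∀ l, a l ∈ V l) :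
    LinearIndependent K (fun g => ρ g (∑ l, a l)) ↔ ∀ l, a l ≠ 0 := by
  classical
  obtain ⟨e, hidem, hproj⟩ := exists_projections ρ hst hind htop b β hb
  choose w hwV hw0 using fun l => (Submodule.ne_bot_iff _).1 (hne l)
  rw [linearIndependent_orbit_iff]
  set Φ := MonoidAlgebra.lift K (End K W) G ρ with hΦ
  constructor
  · intro h l hl
    have he : e l = 0 := h _ (by rw [hproj a ha, hl])
    have := hproj w hwV l
    rw [he, map_zero, LinearMap.zero_apply] at this
    exact hw0 l this.symm
  · intro h r hr
    have hlin (v : ι → W) (hv : ∀ l, v l ∈ V l) (hv0 : ∀ l, v l ≠ 0) (c : ι → K)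
        (hc : Φ (∑ l, c l • e l) (∑ l, v l) = 0) : c = 0 := by
      have : ∑ l, c l • v l = 0 := by
        rw [map_sum Φ, LinearMap.sum_apply] at hc
        simpa only [map_smul, LinearMap.smul_apply, hproj v hv] using hc
      ext l
      exact (smul_eq_zero.1 (hind.eq_zero_of_sum_eq_zero
        (fun l => Submodule.smul_mem _ (c l) (hv l)) this l)).resolve_right (hv0 l)
    have hconst {f f' : MonoidAlgebra K G}
        (hf : ∀ i g, f.coeff (g ^ Fintype.card K ^ i) = f.coeff g)
        (hf' : ∀ i g, f'.coeff (g ^ Fintype.card K ^ i) = f'.coeff g)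
        (hff' : ∀ l, f.coeff (s l) = f'.coeff (s l)) : f = f' := by
      ext g
      obtain ⟨l, i, rfl⟩ := hs g
      rw [hf, hf', hff']
    have hecoeff (c : ι → K) (i : ℕ) (g : G) :
        (∑ l, c l • e l).coeff (g ^ Fintype.card K ^ i) = (∑ l, c l • e l).coeff g := by
      simp [MonoidAlgebra.coeff_pow_card_eq_of_isIdempotentElem hcop (hidem _)]
    let T : (ι → K) →ₗ[K] (ι → K) :=
      { toFun c j := (∑ l, c l • e l).coeff (s j)
        map_add' c d := by ext; simp [add_mul, Finset.sum_add_distrib]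
        map_smul' c d := by ext; simp [mul_assoc, Finset.mul_sum] }
    have hT : Function.Surjective T := by
      refine LinearMap.injective_iff_surjective.1 ((injective_iff_map_eq_zero T).2 fun c hc => ?_)
      refine hlin w hwV hw0 c ?_
      have : ∑ l, c l • e l = 0 :=
        hconst (hecoeff c) (by simp) fun l => by simpa [T] using congr($hc l)
      rw [this, map_zero, LinearMap.zero_apply]
    obtain ⟨t, ht, htr⟩ := MonoidAlgebra.exists_isIdempotentElem_mul_eq hcop r
    obtain ⟨c, hc⟩ := hT fun l => (t * r).coeff (s l)
    have hceq : ∑ l, c l • e l = t * r :=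
      hconst (hecoeff c) (MonoidAlgebra.coeff_pow_card_eq_of_isIdempotentElem hcop ht)
        fun l => congr($hc l)
    have hc0 : c = 0 := hlin a ha h c (by rw [hceq, map_mul, Module.End.mul_apply, hr, map_zero])
    rw [← htr, ← hceq, hc0]
    simp

end

lemma LinearIndependent.iSupIndep_span_image {R M κ ι : Type*} [Ring R] [AddCommGroup M]
    [Module R M] {v : κ → M} (hv : LinearIndependent R v) {t : ι → Set κ}
    (ht : Pairwise (Function.onFun Disjoint t)) :
    iSupIndep fun l => Submodule.span R (v '' t l) := by
  intro l
  simp_rw [← Submodule.span_iUnion, ← Set.image_iUnion]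
  refine hv.disjoint_span_image ?_
  simp only [Set.disjoint_iUnion_right]
  exact fun j hj => ht hj.symm

lemma coprime_card_of_irreducible_X_pow_sub_C {K : Type*} [Field K] [Fintype K] {n : ℕ} {A : K}
    (hirr : Irreducible ((X : K[X]) ^ n - C A)) : n.Coprime (Fintype.card K) := by
  obtain ⟨p, _⟩ := CharP.exists K
  obtain ⟨k, hp, hk⟩ := FiniteField.card K p
  have : Fact p.Prime := ⟨hp⟩
  rw [hk]
  refine Nat.Coprime.pow_right _ (Nat.Coprime.symm ((Nat.Prime.coprime_iff_not_dvd hp).2 ?_))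
  intro hdvd
  obtain ⟨b, hb⟩ := surjective_frobenius K p A
  exact pow_ne_of_irreducible_X_pow_sub_C hirr hdvd hp.ne_one b hb

lemma linearIndependent_pow_of_irreducible_X_pow_sub_C {K L : Type*} [Field K] [Field L]
    [Algebra K L] {n : ℕ} {A : K} (hn : n ≠ 0) (hirr : Irreducible ((X : K[X]) ^ n - C A))
    {θ : L} (hθ : aeval θ ((X : K[X]) ^ n - C A) = 0) :
    LinearIndependent K fun i : Fin n => θ ^ (i : ℕ) := by
  have h := linearIndependent_pow (K := K) θ
  rwa [← minpoly.eq_of_irreducible_of_monic hirr hθ (monic_X_pow_sub_C A hn),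
    natDegree_X_pow_sub_C] at h

/-- Semaev's theorem for binomials: with `x^n - A` irreducible over `F_q` with root `θ`,
`M_l` the classes of the relation `l₁ ~ l₂ ↔ l₁ ≡ l₂ q^i (mod n)` on `{0,…,n-1}` with
representatives `S`, and `V_l` the `F_q`-span of `{θ^m : m ∈ M_l}`: the `V_l` give an
internal direct sum decomposition of `F_{q^n}`, each is Frobenius-invariant, and
`α = Σ α_l` is normal over `F_q` iff all components `α_l` are nonzero. -/
theorem stmt_9 (K L : Type) [Field K] [Fintype K] [Field L] [Algebra K L]
    (q n : ℕ) (hq : Fintype.card K = q) (hrank : Module.finrank K L = n)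
    (A : K) (hirr : Irreducible ((X : Polynomial K) ^ n - C A))
    (θ : L) (hθ : aeval θ ((X : Polynomial K) ^ n - C A) = 0)
    (S : Finset ℕ) (hS : S ⊆ Finset.range n)
    (M : ℕ → Finset ℕ)
    (hM : ∀ l ∈ S, ∀ m : ℕ, m ∈ M l ↔ (m < n ∧ ∃ i : ℕ, m % n = (l * q ^ i) % n))
    (hpart : ∀ m ∈ Finset.range n, ∃! l, l ∈ S ∧ m ∈ M l)
    (V : ℕ → Submodule K L)
    (hV : ∀ l, V l = Submodule.span K ((fun m => θ ^ m) '' ↑(M l))) :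
    DirectSum.IsInternal (fun l : {l // l ∈ S} => V l) ∧
      (∀ l ∈ S, ∀ x ∈ V l, x ^ q ∈ V l) ∧
      ∀ (α : L) (comp : ℕ → L), (∀ l ∈ S, comp l ∈ V l) → ∑ l ∈ S, comp l = α →
        ((∃ bas : Basis (Fin n) K L, ∀ i : Fin n, bas i = α ^ q ^ (i : ℕ)) ↔
          ∀ l ∈ S, comp l ≠ 0) := by
  have hn : n ≠ 0 := by
    rintro rfl
    refine hirr.natDegree_pos.ne' ?_
    rw [pow_zero, ← C_1, ← C_sub, natDegree_C]
  have hn0 : 0 < n := Nat.pos_of_ne_zero hn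
  have : Module.Finite K L := Module.finite_of_finrank_pos (hrank ▸ hn0)
  have : Finite L := Module.finite_of_finite K
  have hli := linearIndependent_pow_of_irreducible_X_pow_sub_C hn hirr hθ
  have hspan := hli.span_eq_top_of_card_eq_finrank' (by simp [hrank])
  have hA : θ ^ n = algebraMap K L A := by simpa [sub_eq_zero] using hθ
  have hθV (l m : ℕ) (hm : m ∈ M l) : θ ^ m ∈ V l := by
    rw [hV]
    exact Submodule.subset_span ⟨m, hm, rfl⟩
  have hVFin (l : {l // l ∈ S}) :
      V l = Submodule.span K ((fun i : Fin n => θ ^ (i : ℕ)) '' {i | (i : ℕ) ∈ M l}) := by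
    rw [hV]
    congr 1
    ext x
    constructor
    · rintro ⟨m, hm, rfl⟩
      exact ⟨⟨m, ((hM l l.2 m).1 hm).1⟩, hm, rfl⟩
    · rintro ⟨m, hm, rfl⟩
      exact ⟨m, hm, rfl⟩
  have hind : iSupIndep fun l : {l // l ∈ S} => V l := by
    simp_rw [hVFin]
    refine hli.iSupIndep_span_image fun l l' hll' => Set.disjoint_left.2 fun i hi hi' => hll' ?_
    exact Subtype.ext ((hpart i (Finset.mem_range.2 i.2)).unique ⟨l.2, hi⟩ ⟨l'.2, hi'⟩)
  have htop : ⨆ l : {l // l ∈ S}, V l = ⊤ := by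
    rw [eq_top_iff, ← hspan, Submodule.span_le]
    rintro _ ⟨i, rfl⟩
    obtain ⟨l, ⟨hl, hil⟩, -⟩ := hpart i (Finset.mem_range.2 i.2)
    exact Submodule.mem_iSup_of_mem (⟨l, hl⟩ : {l // l ∈ S}) (hθV l i hil)
  have hfrob (l : ℕ) (hl : l ∈ S) (x : L) (hx : x ∈ V l) : x ^ q ∈ V l := by
    have hle : V l ≤ (V l).comap (FiniteField.frobeniusAlgHom K L).toLinearMap := by
      conv_lhs => rw [hV]
      rw [Submodule.span_le]
      rintro _ ⟨m, hm, rfl⟩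
      obtain ⟨hmn, i, hi⟩ := (hM l hl m).1 hm
      have hmem : m * q % n ∈ M l := by
        refine (hM l hl _).2 ⟨Nat.mod_lt _ hn0, i + 1, ?_⟩
        rw [Nat.mod_mod, Nat.mul_mod, hi, ← Nat.mul_mod, pow_succ, mul_assoc]
      have heq : (θ ^ m) ^ q = A ^ (m * q / n) • θ ^ (m * q % n) := by
        rw [← pow_mul, Algebra.smul_def, map_pow, ← hA, ← pow_mul, ← pow_add, Nat.div_add_mod]
      change (θ ^ m) ^ Fintype.card K ∈ V l
      rw [hq, heq]
      exact Submodule.smul_mem _ _ (hθV l _ hmem)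
    rw [← hq]
    exact hle hx
  refine ⟨DirectSum.isInternal_submodule_of_iSupIndep_of_iSup_eq_top hind htop, hfrob, ?_⟩
  rintro α comp hcomp rfl
  let σ := FiniteField.frobeniusAlgEquivOfAlgebraic K L
  have hσ (i : ℕ) (x : L) : (σ ^ i) x = x ^ q ^ i := by
    rw [AlgEquiv.coe_pow, FiniteField.coe_frobeniusAlgEquivOfAlgebraic_iterate, hq]
  have hσord : orderOf σ = n :=
    (FiniteField.orderOf_frobeniusAlgEquivOfAlgebraic K L).trans hrank
  have hσbij : Function.Bijective fun i : Fin n => σ ^ (i : ℕ) := by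
    subst hrank
    exact FiniteField.bijective_frobeniusAlgEquivOfAlgebraic_pow K L
  let _ : CommGroup Gal(L/K) := IsCyclic.commGroup
  let _ : Fintype Gal(L/K) := Fintype.ofFinite _
  let ρ : Gal(L/K) →* End K L := DistribMulAction.toModuleEnd K L
  have hρ (g : Gal(L/K)) (x : L) : ρ g x = g x := rfl
  have hcop : (Nat.card Gal(L/K)).Coprime (Fintype.card K) := by
    rw [IsGalois.card_aut_eq_finrank, hrank]
    exact coprime_card_of_irreducible_X_pow_sub_C hirr
  have hst (l : {l // l ∈ S}) (g : Gal(L/K)) (x : L) (hx : x ∈ V l) : ρ g x ∈ V l := by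
    obtain ⟨i, rfl⟩ := hσbij.2 g
    rw [hρ, hσ]
    induction (i : ℕ) with
    | zero => simpa using hx
    | succ k ih =>
      rw [pow_succ, pow_mul]
      exact hfrob l l.2 _ ih
  have hne (l : {l // l ∈ S}) : V l ≠ ⊥ := by
    have hl := Finset.mem_range.1 (hS l.2)
    exact (Submodule.ne_bot_iff _).2 ⟨_, hθV l l ((hM l l.2 l).2 ⟨hl, 0, by simp⟩),
      hli.ne_zero ⟨l, hl⟩⟩
  have hs (g : Gal(L/K)) :
      ∃ (l : {l // l ∈ S}) (i : ℕ), g = (σ ^ (l : ℕ)) ^ Fintype.card K ^ i := by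
    obtain ⟨m, rfl⟩ := hσbij.2 g
    obtain ⟨l, ⟨hl, hml⟩, -⟩ := hpart m (Finset.mem_range.2 m.2)
    obtain ⟨-, i, hi⟩ := (hM l hl m).1 hml
    refine ⟨⟨l, hl⟩, i, ?_⟩
    rw [← pow_mul, hq]
    exact pow_eq_pow_iff_modEq.2 (hσord ▸ hi)
  have key := linearIndependent_orbit_iff_forall_ne_zero ρ hcop hst hind htop hne
    (IsGalois.normalBasis K L) _ (IsGalois.normalBasis_apply) (fun l => σ ^ (l : ℕ)) hs
    (fun l => comp l) (fun l => hcomp l l.2)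
  rw [Finset.sum_coe_sort S comp, Subtype.forall] at key
  rw [← key, ← linearIndependent_equiv (Equiv.ofBijective _ hσbij)]
  have hfun : (fun g => ρ g (∑ l ∈ S, comp l)) ∘ Equiv.ofBijective _ hσbij =
      fun i : Fin n => (∑ l ∈ S, comp l) ^ q ^ (i : ℕ) :=
    funext fun i => hσ i _
  rw [hfun]
  constructor
  · rintro ⟨bas, hbas⟩
    simpa [← funext hbas] using bas.linearIndependent
  · intro h
    have : Nonempty (Fin n) := ⟨⟨0, hn0⟩⟩
    exact ⟨basisOfLinearIndependentOfCardEqFinrank h (by simp [hrank]), fun i => by simp⟩
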